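/- Let f : J → ℝ be differentiable on J with (^{ABC}D^α f) continuous on J. If f attains its minimum over J at a point τ₀ ∈ J, then (^{ABC}D^α f)(τ₀) ≤ 0. -/

import Mathlib

/-- One-parameter Mittag-Leffler function `E_α(z) = ∑ zⁿ / Γ(nα+1)`. -/
noncomputable def mlE (α z : ℝ) : ℝ := ∑' n : ℕ, z ^ n / Real.Gamma (n * α + 1)

/-- Atangana–Baleanu–Caputo fractional derivative of order `α` (base point 0),
with normalization constant `B = B(α)`. -/
noncomputable def abcD (α B : ℝ) (m : ℝ → ℝ) (τ : ℝ) : ℝ :=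
  B / (1 - α) * ∫ σ in (0:ℝ)..τ, mlE α (-(α / (1 - α)) * (τ - σ) ^ α) * deriv m σ

open Filter Topology

/-- `(1-X)^(-s)`. -/
noncomputable def mlAs (s : ℝ) : PowerSeries ℝ :=
  PowerSeries.rescale (-1 : ℝ) (PowerSeries.binomialSeries ℝ (-s))

lemma mlAs_add (s t : ℝ) : mlAs (s + t) = mlAs s * mlAs t := by
  unfold mlAs
  rw [neg_add, PowerSeries.binomialSeries_add, map_mul]

lemma mlAs_zero : mlAs 0 = 1 := by
  unfold mlAs
  rw [neg_zero, PowerSeries.binomialSeries_zero, map_one]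

lemma mlAs_coeff (s : ℝ) (n : ℕ) :
    PowerSeries.coeff n (mlAs s) = ∏ j ∈ Finset.range n, ((s + j) / (j + 1)) := by
  unfold mlAs
  rw [PowerSeries.coeff_rescale, PowerSeries.binomialSeries_coeff, Ring.choose_eq_smul,
    Polynomial.descPochhammer_smeval_eq_ascPochhammer, Polynomial.ascPochhammer_smeval_eq_eval,
    ← descPochhammer_eval_eq_ascPochhammer, descPochhammer_eval_eq_prod_range]
  have h : ∏ j ∈ Finset.range n, (-s - (j : ℝ)) = (-1) ^ n * ∏ j ∈ Finset.range n, (s + j) := by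
    rw [← Finset.card_range n, ← Finset.prod_const, Finset.card_range, ← Finset.prod_mul_distrib]
    exact Finset.prod_congr rfl fun j _ => by ring
  have h2 : ∏ j ∈ Finset.range n, ((j : ℝ) + 1) = n.factorial := by
    rw [← Finset.prod_range_add_one_eq_factorial]; push_cast; rfl
  rw [h, Finset.prod_div_distrib, h2]
  have : ((-1 : ℝ) ^ n) * (-1) ^ n = 1 := by rw [← mul_pow]; simp
  simp only [smul_eq_mul, mul_one]
  linear_combination ((n.factorial : ℝ)⁻¹ * ∏ j ∈ Finset.range n, (s + j)) * this

noncomputable def mlbb (n : ℕ) (y : ℝ) : ℝ := ∏ j ∈ Finset.range n, (1 + y / (j + 1))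

lemma mlbb_eq (n : ℕ) (y : ℝ) : PowerSeries.coeff n (mlAs (1 + y)) = mlbb n y := by
  rw [mlAs_coeff]
  refine Finset.prod_congr rfl fun j _ => ?_
  have : (j : ℝ) + 1 ≠ 0 := by positivity
  field_simp
  ring

lemma mlbb_pos (n : ℕ) {y : ℝ} (hy : 0 ≤ y) : 0 < mlbb n y :=
  Finset.prod_pos fun j _ => by positivity

lemma mlbb_le (n : ℕ) {y : ℝ} (hy : 0 ≤ y) : mlbb n y ≤ (1 + y) ^ n := by
  unfold mlbb
  calc _ ≤ ∏ j ∈ Finset.range n, (1 + y) := by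
        refine Finset.prod_le_prod (fun j _ => by positivity) fun j _ => ?_
        have : y / ((j : ℝ) + 1) ≤ y := div_le_self hy (by linarith [(Nat.cast_nonneg j : (0:ℝ) ≤ j)])
        linarith
    _ = _ := by simp

lemma mlbb_summable (n : ℕ) {α h : ℝ} (hα : 0 < α) (hα1 : α < 1) (hh : |h| < 1) :
    Summable fun k : ℕ => h ^ k * mlbb n (k * α) := by
  have h1 := summable_pow_mul_geometric_of_norm_lt_one n (r := |h|) (by simpa using hh)
  have h2 : Summable fun k : ℕ => |h| ^ k * ((1:ℝ) + k) ^ n := by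
    by_cases h0 : |h| = 0
    · refine summable_of_ne_finset_zero (s := {0}) fun k hk => ?_
      have : k ≠ 0 := by simpa using hk
      simp [h0, this]
    have := ((summable_nat_add_iff 1).2 h1).mul_left (|h|⁻¹)
    refine this.congr fun k => ?_
    push_cast
    field_simp
    ring
  refine Summable.of_norm_bounded h2 fun k => ?_
  have hk : (0:ℝ) ≤ k * α := by positivity
  rw [norm_mul, norm_pow, Real.norm_eq_abs, Real.norm_eq_abs, abs_of_pos (mlbb_pos n hk)]
  gcongr
  refine (mlbb_le n hk).trans ?_
  gcongr
  nlinarith [(Nat.cast_nonneg k : (0:ℝ) ≤ k)]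

noncomputable def mlU (α h : ℝ) : PowerSeries ℝ :=
  PowerSeries.mk fun n => ∑' k : ℕ, (-h) ^ k * mlbb n (k * α)

lemma mlU_eq {α h : ℝ} (hα : 0 < α) (hα1 : α < 1) (h0 : 0 ≤ h) (h1 : h < 1) :
    mlU α h * (PowerSeries.C h + mlAs (-α)) = mlAs (1 - α) := by
  have hh : |-h| < 1 := by rw [abs_neg, abs_of_nonneg h0]; exact h1
  have key : mlU α h = mlAs 1 - PowerSeries.C h * (mlU α h * mlAs α) := by
    ext n
    rw [map_sub, PowerSeries.coeff_C_mul, PowerSeries.coeff_mul]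
    have e1 : ∀ p ∈ Finset.HasAntidiagonal.antidiagonal n,
        HasSum (fun k : ℕ => ((-h) ^ k * mlbb p.1 (k * α)) * PowerSeries.coeff p.2 (mlAs α))
        (PowerSeries.coeff p.1 (mlU α h) * PowerSeries.coeff p.2 (mlAs α)) := by
      intro p _
      refine HasSum.mul_right _ ?_
      simp only [mlU, PowerSeries.coeff_mk]
      exact (mlbb_summable p.1 hα hα1 hh).hasSum
    have e2 := hasSum_sum e1
    have e3 : ∀ k : ℕ, ∑ p ∈ Finset.HasAntidiagonal.antidiagonal n,
        ((-h) ^ k * mlbb p.1 (k * α)) * PowerSeries.coeff p.2 (mlAs α)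
        = (-h) ^ k * mlbb n ((k + 1 : ℕ) * α) := by
      intro k
      rw [← mlbb_eq, show (1:ℝ) + (k + 1 : ℕ) * α = (1 + k * α) + α by push_cast; ring, mlAs_add,
        PowerSeries.coeff_mul, Finset.mul_sum]
      refine Finset.sum_congr rfl fun p _ => ?_
      rw [mlbb_eq]; ring
    simp only [e3] at e2
    rw [← e2.tsum_eq, ← tsum_mul_left]
    simp only [mlU, PowerSeries.coeff_mk]
    rw [(mlbb_summable n hα hα1 hh).tsum_eq_zero_add]
    have : mlAs 1 = mlAs (1 + 0) := by simp
    rw [this, mlbb_eq, sub_eq_add_neg, ← tsum_neg]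
    congr 1
    · simp
    · refine tsum_congr fun k => ?_
      rw [pow_succ]; ring
  have e : mlAs α * mlAs (-α) = 1 := by rw [← mlAs_add]; simp [mlAs_zero]
  have e' : mlAs (1 - α) = mlAs 1 * mlAs (-α) := by rw [← mlAs_add]; rfl
  rw [e']
  linear_combination mlAs (-α) * key - PowerSeries.C h * mlU α h * e

noncomputable def mlD (α h : ℝ) : PowerSeries ℝ := PowerSeries.C h + mlAs (-α)

lemma mlD_const (α h : ℝ) : PowerSeries.constantCoeff (mlD α h) = h + 1 := by
  rw [mlD, map_add, PowerSeries.constantCoeff_C, ← PowerSeries.coeff_zero_eq_constantCoeff_apply,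
    mlAs_coeff]
  simp

lemma mlD_coeff_nonpos {α : ℝ} (h : ℝ) (hα : 0 < α) (hα1 : α < 1) {n : ℕ} (hn : n ≠ 0) :
    PowerSeries.coeff n (mlD α h) ≤ 0 := by
  obtain ⟨m, rfl⟩ := Nat.exists_eq_succ_of_ne_zero hn
  rw [mlD, map_add, PowerSeries.coeff_C, if_neg hn, zero_add, mlAs_coeff, Finset.prod_range_succ']
  refine mul_nonpos_of_nonneg_of_nonpos (Finset.prod_nonneg fun j _ => ?_) ?_
  · push_cast
    have : (0:ℝ) ≤ j := Nat.cast_nonneg j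
    exact div_nonneg (by linarith) (by linarith)
  · simp; exact hα.le

lemma mlW_nonneg {α h : ℝ} (hα : 0 < α) (hα1 : α < 1) (h0 : 0 ≤ h) (n : ℕ) :
    0 ≤ PowerSeries.coeff n (mlD α h)⁻¹ := by
  induction n using Nat.strong_induction_on with
  | _ n ih =>
    rw [PowerSeries.coeff_inv, mlD_const]
    split_ifs with hn
    · positivity
    · rw [neg_mul, ← mul_neg, ← Finset.sum_neg_distrib]
      refine mul_nonneg (by positivity) (Finset.sum_nonneg fun p hp => ?_)
      split_ifs with hlt
      · have : p.1 ≠ 0 := by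
          have := Finset.HasAntidiagonal.mem_antidiagonal.1 hp
          omega
        nlinarith [mlD_coeff_nonpos h hα hα1 this, ih _ hlt]
      · simp

lemma ml_mul_nonneg {A B : PowerSeries ℝ} (hA : ∀ n, 0 ≤ PowerSeries.coeff n A)
    (hB : ∀ n, 0 ≤ PowerSeries.coeff n B) (n : ℕ) : 0 ≤ PowerSeries.coeff n (A * B) := by
  rw [PowerSeries.coeff_mul]
  exact Finset.sum_nonneg fun p _ => mul_nonneg (hA _) (hB _)

lemma mlAs_nonneg {s : ℝ} (hs : 0 ≤ s) (n : ℕ) : 0 ≤ PowerSeries.coeff n (mlAs s) := by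
  rw [mlAs_coeff]
  exact Finset.prod_nonneg fun j _ => by positivity

lemma mlU_anti {α h h' : ℝ} (hα : 0 < α) (hα1 : α < 1) (h0 : 0 ≤ h) (hh : h ≤ h') (h1 : h' < 1)
    (n : ℕ) : PowerSeries.coeff n (mlU α h') ≤ PowerSeries.coeff n (mlU α h) := by
  have i1 : mlD α h * (mlD α h)⁻¹ = 1 :=
    PowerSeries.mul_inv_cancel _ (by rw [mlD_const]; positivity)
  have i2 : mlD α h' * (mlD α h')⁻¹ = 1 :=
    PowerSeries.mul_inv_cancel _ (by rw [mlD_const]; linarith)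
  have u1 := mlU_eq hα hα1 h0 (hh.trans_lt h1)
  have u2 := mlU_eq hα hα1 (h0.trans hh) h1
  rw [← mlD] at u1 u2
  have d : mlD α h' - mlD α h = PowerSeries.C (h' - h) := by
    rw [mlD, mlD, map_sub]; ring
  have key : mlU α h - mlU α h' =
      PowerSeries.C (h' - h) * (mlAs (1 - α) * ((mlD α h)⁻¹ * (mlD α h')⁻¹)) := by
    rw [← d]
    have a1 : mlU α h = mlAs (1 - α) * (mlD α h)⁻¹ := by rw [← u1, mul_assoc, i1, mul_one]
    have a2 : mlU α h' = mlAs (1 - α) * (mlD α h')⁻¹ := by rw [← u2, mul_assoc, i2, mul_one]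
    rw [a1, a2]
    linear_combination mlAs (1 - α) * (mlD α h')⁻¹ * i1 - mlAs (1 - α) * (mlD α h)⁻¹ * i2
  have := congrArg (PowerSeries.coeff n) key
  rw [map_sub, PowerSeries.coeff_C_mul] at this
  have p : 0 ≤ PowerSeries.coeff n (mlAs (1 - α) * ((mlD α h)⁻¹ * (mlD α h')⁻¹)) :=
    ml_mul_nonneg (mlAs_nonneg (by linarith))
      (ml_mul_nonneg (mlW_nonneg hα hα1 h0) (mlW_nonneg hα hα1 (h0.trans hh))) n
  nlinarith

lemma mlU_nonneg {α h : ℝ} (hα : 0 < α) (hα1 : α < 1) (h0 : 0 ≤ h) (h1 : h < 1)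
    (n : ℕ) : 0 ≤ PowerSeries.coeff n (mlU α h) := by
  have i1 : mlD α h * (mlD α h)⁻¹ = 1 :=
    PowerSeries.mul_inv_cancel _ (by rw [mlD_const]; positivity)
  have u1 := mlU_eq hα hα1 h0 h1
  rw [← mlD] at u1
  have a1 : mlU α h = mlAs (1 - α) * (mlD α h)⁻¹ := by rw [← u1, mul_assoc, i1, mul_one]
  rw [a1]
  exact ml_mul_nonneg (mlAs_nonneg (by linarith)) (mlW_nonneg hα hα1 h0) n

/-- The normalized product `n^(-y) ∏ (1+y/j)`. -/
noncomputable def mlc (n : ℕ) (y : ℝ) : ℝ := mlbb n y * (n : ℝ) ^ (-y)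

lemma mlc_succ_le {n : ℕ} (hn : 0 < n) {y : ℝ} (hy : 0 ≤ y) : mlc (n + 1) y ≤ mlc n y := by
  have hn' : (0:ℝ) < n := by exact_mod_cast hn
  unfold mlc
  have e : mlbb (n + 1) y = mlbb n y * (1 + y / (n + 1)) := by
    unfold mlbb; rw [Finset.prod_range_succ]
  rw [e, mul_assoc]
  refine mul_le_mul_of_nonneg_left ?_ (mlbb_pos n hy).le
  have hl : 1 / ((n:ℝ) + 1) ≤ Real.log (n + 1) - Real.log n := by
    rw [← Real.log_div (by positivity) hn'.ne']
    have := Real.one_sub_inv_le_log_of_pos (x := ((n:ℝ) + 1) / n) (by positivity)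
    refine le_trans (le_of_eq ?_) this
    field_simp
    ring
  push_cast
  rw [Real.rpow_def_of_pos (by positivity), Real.rpow_def_of_pos hn']
  have h2 : 1 + y / ((n:ℝ) + 1) ≤ Real.exp (y / (n + 1)) := by
    rw [add_comm]; exact Real.add_one_le_exp _
  calc _ ≤ Real.exp (y / (n + 1)) * Real.exp (Real.log (n + 1) * -y) := by gcongr
    _ = Real.exp (y / (n + 1) + Real.log (n + 1) * -y) := by rw [Real.exp_add]
    _ ≤ _ := by
      refine Real.exp_le_exp.2 ?_
      have := mul_le_mul_of_nonneg_left hl hy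
      rw [mul_one_div] at this
      nlinarith

lemma mlc_le {M n : ℕ} (hM : 0 < M) (hMn : M ≤ n) {y : ℝ} (hy : 0 ≤ y) : mlc n y ≤ mlc M y := by
  induction n, hMn using Nat.le_induction with
  | base => exact le_rfl
  | succ n hn ih => exact (mlc_succ_le (by omega) hy).trans ih

lemma mlc_nonneg (n : ℕ) {y : ℝ} (hy : 0 ≤ y) : 0 ≤ mlc n y :=
  mul_nonneg (mlbb_pos n hy).le (by positivity)

lemma mlc_tendsto {y : ℝ} (hy : 0 ≤ y) :
    Tendsto (fun n => mlc n y) atTop (𝓝 (1 / Real.Gamma (y + 1))) := by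
  rcases hy.eq_or_lt with rfl | hy
  · simp [mlc, mlbb]
  rw [Real.Gamma_add_one hy.ne']
  have hG := ((Real.GammaSeq_tendsto_Gamma y).const_mul y).inv₀
    (mul_pos hy (Real.Gamma_pos_of_pos hy)).ne'
  rw [one_div]
  refine hG.congr' ?_
  filter_upwards [eventually_gt_atTop 0] with n hn
  have hn' : (0:ℝ) < n := by exact_mod_cast hn
  have e : ∏ j ∈ Finset.range (n + 1), (y + j) = mlbb n y * n.factorial * y := by
    rw [Finset.prod_range_succ', ← Finset.prod_range_add_one_eq_factorial, mlbb]
    push_cast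
    rw [← Finset.prod_mul_distrib, add_zero]
    congr 1
    refine Finset.prod_congr rfl fun j _ => ?_
    have : (j:ℝ) + 1 ≠ 0 := by positivity
    field_simp
    ring
  unfold Real.GammaSeq mlc
  rw [e, Real.rpow_neg hn'.le]
  have := (mlbb_pos n hy.le).ne'
  have h3 : (n.factorial : ℝ) ≠ 0 := by positivity
  have h4 : (n:ℝ) ^ y ≠ 0 := by positivity
  field_simp

lemma ml_exists_bound {α : ℝ} (hα : 0 < α) (hα1 : α < 1) (x : ℝ) :
    ∃ M : ℕ, 0 < M ∧ |x| * (M:ℝ) ^ (-α) < 1 ∧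
      Summable fun k : ℕ => |x| ^ k * mlc M (k * α) := by
  have ht : Tendsto (fun n : ℕ => |x| * (n:ℝ) ^ (-α)) atTop (𝓝 (|x| * 0)) :=
    ((tendsto_rpow_neg_atTop hα).comp tendsto_natCast_atTop_atTop).const_mul _
  rw [mul_zero] at ht
  obtain ⟨M, h1, h2⟩ := ((ht.eventually_lt_const one_pos).and (eventually_gt_atTop 0)).exists
  refine ⟨M, h2, h1, ?_⟩
  have := mlbb_summable M hα hα1 (h := |x| * (M:ℝ) ^ (-α)) (by
    rwa [abs_of_nonneg (by positivity)])
  refine this.congr fun k => ?_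
  rw [mlc, mul_pow, ← Real.rpow_natCast ((M:ℝ) ^ (-α)), ← Real.rpow_mul (by positivity),
    show -α * (k:ℝ) = -(k * α) by ring]
  ring

lemma ml_summable {α : ℝ} (hα : 0 < α) (hα1 : α < 1) (x : ℝ) :
    Summable fun k : ℕ => |x| ^ k * (1 / Real.Gamma (k * α + 1)) := by
  obtain ⟨M, hM, -, hs⟩ := ml_exists_bound hα hα1 x
  have hy : ∀ k : ℕ, (0:ℝ) ≤ k * α := fun k => by positivity
  refine Summable.of_nonneg_of_le (fun k => ?_) (fun k => ?_) hs
  · have := Real.Gamma_pos_of_pos (s := k * α + 1) (by linarith [hy k])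
    positivity
  · refine mul_le_mul_of_nonneg_left ?_ (by positivity)
    refine le_of_tendsto (mlc_tendsto (hy k)) ?_
    filter_upwards [eventually_ge_atTop M] with n hn
    exact mlc_le hM hn (hy k)

lemma mlU_tendsto {α : ℝ} (hα : 0 < α) (hα1 : α < 1) (x : ℝ) :
    Tendsto (fun n : ℕ => PowerSeries.coeff n (mlU α (x * (n:ℝ) ^ (-α)))) atTop
      (𝓝 (mlE α (-x))) := by
  obtain ⟨M, hM, -, hs⟩ := ml_exists_bound hα hα1 x
  have hy : ∀ k : ℕ, (0:ℝ) ≤ k * α := fun k => by positivity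
  have h : Tendsto (fun n : ℕ => ∑' k : ℕ, (-x) ^ k * mlc n (k * α)) atTop
      (𝓝 (∑' k : ℕ, (-x) ^ k * (1 / Real.Gamma (k * α + 1)))) := by
    refine tendsto_tsum_of_dominated_convergence hs
      (fun k => (mlc_tendsto (hy k)).const_mul _) ?_
    filter_upwards [eventually_ge_atTop M] with n hn k
    rw [norm_mul, norm_pow, norm_neg, Real.norm_eq_abs, Real.norm_eq_abs,
      abs_of_nonneg (mlc_nonneg n (hy k))]
    exact mul_le_mul_of_nonneg_left (mlc_le hM hn (hy k)) (by positivity)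
  have e : mlE α (-x) = ∑' k : ℕ, (-x) ^ k * (1 / Real.Gamma (k * α + 1)) := by
    unfold mlE
    exact tsum_congr fun k => by ring
  rw [e]
  refine h.congr fun n => ?_
  rw [mlU, PowerSeries.coeff_mk]
  refine tsum_congr fun k => ?_
  rw [mlc, ← neg_mul x, mul_pow, ← Real.rpow_natCast ((n:ℝ) ^ (-α)), ← Real.rpow_mul (by positivity),
    show -α * (k:ℝ) = -(k * α) by ring]
  ring

lemma ml_small {α : ℝ} (hα : 0 < α) (x : ℝ) :
    ∀ᶠ n : ℕ in atTop, x * (n:ℝ) ^ (-α) < 1 := by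
  have ht : Tendsto (fun n : ℕ => x * (n:ℝ) ^ (-α)) atTop (𝓝 (x * 0)) :=
    ((tendsto_rpow_neg_atTop hα).comp tendsto_natCast_atTop_atTop).const_mul _
  rw [mul_zero] at ht
  exact ht.eventually_lt_const one_pos

lemma mlE_nonneg {α : ℝ} (hα : 0 < α) (hα1 : α < 1) {x : ℝ} (hx : 0 ≤ x) : 0 ≤ mlE α (-x) := by
  refine ge_of_tendsto (mlU_tendsto hα hα1 x) ?_
  filter_upwards [ml_small hα x] with n hn
  exact mlU_nonneg hα hα1 (by positivity) hn n

lemma mlE_anti {α : ℝ} (hα : 0 < α) (hα1 : α < 1) {x x' : ℝ} (hx : 0 ≤ x) (hxx : x ≤ x') :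
    mlE α (-x') ≤ mlE α (-x) := by
  refine le_of_tendsto_of_tendsto (mlU_tendsto hα hα1 x') (mlU_tendsto hα hα1 x) ?_
  filter_upwards [ml_small hα x'] with n hn
  exact mlU_anti hα hα1 (by positivity) (by gcongr) hn n

lemma mlE_differentiable {α : ℝ} (hα : 0 < α) (hα1 : α < 1) : Differentiable ℝ (mlE α) := by
  set c : ℕ → ℝ := fun k => 1 / Real.Gamma (k * α + 1) with hc
  have hcn : ∀ k, 0 ≤ c k := fun k => by
    have := Real.Gamma_pos_of_pos (s := k * α + 1) (by positivity)
    positivity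
  have hr : (FormalMultilinearSeries.ofScalars ℝ c).radius = ⊤ := by
    refine FormalMultilinearSeries.radius_eq_top_of_summable_norm _ fun r => ?_
    refine (ml_summable hα hα1 r).congr fun k => ?_
    rw [FormalMultilinearSeries.ofScalars_norm, Real.norm_eq_abs, abs_of_nonneg (hcn k), mul_comm]
    simp [hc]
  have hf := (FormalMultilinearSeries.ofScalars ℝ c).hasFPowerSeriesOnBall (by rw [hr]; simp)
  have e : (FormalMultilinearSeries.ofScalars ℝ c).sum = mlE α := by
    funext z
    have := FormalMultilinearSeries.ofScalars_sum_eq (E := ℝ) c z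
    rw [FormalMultilinearSeries.ofScalarsSum] at this
    rw [this, mlE]
    refine tsum_congr fun k => ?_
    rw [hc]; simp only [smul_eq_mul]; ring
  rw [e, hr] at hf
  intro z
  exact (hf.analyticAt_of_mem (by simp)).differentiableAt

lemma mlE_deriv_nonneg {α : ℝ} (hα : 0 < α) (hα1 : α < 1) {z : ℝ} (hz : z < 0) :
    0 ≤ deriv (mlE α) z := by
  have hm : MonotoneOn (mlE α) (Set.Iic 0) := by
    intro a _ b hb hab
    have := mlE_anti hα hα1 (x := -b) (x' := -a) (by simpa using hb) (by linarith)
    simpa using this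
  have := hm.derivWithin_nonneg (x := z)
  rwa [derivWithin_of_mem_nhds (Iic_mem_nhds hz)] at this

theorem abc_deriv_nonpos_at_min
    (T α B : ℝ) (hT : 0 < T) (hα : 0 < α) (hα1 : α < 1) (hB : 0 < B)
    (f : ℝ → ℝ)
    (hfdiff : ∀ τ ∈ Set.Icc (0:ℝ) T, DifferentiableAt ℝ f τ)
    (hcont : ContinuousOn (abcD α B f) (Set.Icc (0:ℝ) T))
    (τ₀ : ℝ) (hτ₀ : τ₀ ∈ Set.Icc (0:ℝ) T)
    (hmin : ∀ τ ∈ Set.Icc (0:ℝ) T, f τ₀ ≤ f τ) :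
    abcD α B f τ₀ ≤ 0 := by
  unfold abcD
  refine mul_nonpos_of_nonneg_of_nonpos (div_nonneg hB.le (by linarith)) ?_
  have hl : 0 < α / (1 - α) := div_pos hα (by linarith)
  set l := α / (1 - α) with hldef
  have hsub : ∀ x ∈ Set.Icc 0 τ₀, x ∈ Set.Icc 0 T := fun x hx => ⟨hx.1, hx.2.trans hτ₀.2⟩
  by_cases hint : IntervalIntegrable
    (fun σ => mlE α (-l * (τ₀ - σ) ^ α) * deriv f σ) MeasureTheory.volume 0 τ₀
  swap
  · rw [intervalIntegral.integral_undef hint]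
  have hint' := (intervalIntegrable_iff_integrableOn_Icc_of_le hτ₀.1).1 hint
  have hEd := mlE_differentiable hα hα1
  have main := intervalIntegral.integral_le_sub_of_hasDeriv_right_of_le
    (g := fun σ => mlE α (-l * (τ₀ - σ) ^ α) * (f σ - f τ₀))
    (g' := fun σ => (deriv (mlE α) (-l * (τ₀ - σ) ^ α) * (-l * (-1 * α * (τ₀ - σ) ^ (α - 1))))
      * (f σ - f τ₀) + mlE α (-l * (τ₀ - σ) ^ α) * deriv f σ) hτ₀.1 ?_ ?_ hint' ?_
  · refine main.trans ?_
    have h1 : 0 ≤ mlE α (-l * (τ₀ - 0) ^ α) := by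
      rw [neg_mul, sub_zero]
      have := Real.rpow_nonneg hτ₀.1 α
      exact mlE_nonneg hα hα1 (by positivity)
    have h2 := hmin 0 ⟨le_rfl, hT.le⟩
    simp only [sub_self, mul_zero, zero_sub]
    have := mul_nonneg h1 (sub_nonneg.2 h2)
    linarith
  · refine ContinuousOn.mul ?_ ?_
    · refine hEd.continuous.comp_continuousOn ?_
      refine ContinuousOn.mul continuousOn_const ?_
      exact (continuousOn_const.sub continuousOn_id).rpow_const fun x _ => Or.inr hα.le
    · refine ContinuousOn.sub (fun x hx => ?_) continuousOn_const
      exact (hfdiff x (hsub x hx)).continuousAt.continuousWithinAt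
  · intro x hx
    have hpos : 0 < τ₀ - x := by linarith [hx.2]
    refine HasDerivAt.hasDerivWithinAt ?_
    have d1 : HasDerivAt (fun σ => (τ₀ - σ) ^ α) (-1 * α * (τ₀ - x) ^ (α - 1)) x :=
      ((hasDerivAt_id x).const_sub τ₀).rpow_const (Or.inl hpos.ne')
    have d2 := (hEd (-l * (τ₀ - x) ^ α)).hasDerivAt.comp x (d1.const_mul (-l))
    have d3 := (hfdiff x (hsub x ⟨hx.1.le, hx.2.le⟩)).hasDerivAt.sub_const (f τ₀)
    exact d2.mul d3
  · intro x hx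
    have hpos : 0 < τ₀ - x := by linarith [hx.2]
    have hp := Real.rpow_pos_of_pos hpos α
    have hp1 := Real.rpow_pos_of_pos hpos (α - 1)
    have a1 := mlE_deriv_nonneg hα hα1 (z := -l * (τ₀ - x) ^ α) (by nlinarith)
    have a2 : 0 ≤ -l * (-1 * α * (τ₀ - x) ^ (α - 1)) := by
      have : 0 ≤ l * (α * (τ₀ - x) ^ (α - 1)) := by positivity
      linarith
    have a3 := sub_nonneg.2 (hmin x (hsub x ⟨hx.1.le, hx.2.le⟩))
    have := mul_nonneg (mul_nonneg a1 a2) a3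
    linarith
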